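/- arXiv:2307.12703 — 4 statements merged into one kernel-verified Lean document; each statement's English description precedes it below -/
import Mathlib

section
/- Let g : ℝ → ℝ be twice continuously differentiable such that g, g' and g'' all have at most polynomial growth. Then the function φ_g is differentiable at every ρ ∈ (−1,1) and its derivative is given by φ_g'(ρ) = ∫∫ g'(x) g'(ρx + √(1−ρ²) y) dγ(x) dγ(y). -/
open MeasureTheory ProbabilityTheory

/-- `h` has at most polynomial growth. -/
def PolyGrowth (h : ℝ → ℝ) : Prop :=
  ∃ C > (0 : ℝ), ∃ m : ℕ, ∀ x : ℝ, |h x| ≤ C * (1 + |x|) ^ m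

/-- The correlation functional `φ_g`. -/
noncomputable def phiCorr (g : ℝ → ℝ) (ρ : ℝ) : ℝ :=
  ∫ x, ∫ y, g x * g (ρ * x + Real.sqrt (1 - ρ ^ 2) * y)
    ∂(gaussianReal 0 1) ∂(gaussianReal 0 1)

def ww (z : ℝ × ℝ) : ℝ := (1 + |z.1|) * (1 + |z.2|)

lemma one_le_ww (z : ℝ × ℝ) : 1 ≤ ww z := by
  unfold ww; nlinarith [abs_nonneg z.1, abs_nonneg z.2, mul_nonneg (abs_nonneg z.1) (abs_nonneg z.2)]

def PG2 (F : ℝ × ℝ → ℝ) : Prop := ∃ C ≥ (0 : ℝ), ∃ n : ℕ, ∀ z, |F z| ≤ C * ww z ^ n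

lemma PG2.mul {F G : ℝ × ℝ → ℝ} (hF : PG2 F) (hG : PG2 G) : PG2 (fun z => F z * G z) := by
  obtain ⟨C, hC, n, h⟩ := hF
  obtain ⟨D, hD, m, k⟩ := hG
  refine ⟨C * D, by positivity, n + m, fun z => ?_⟩
  have := one_le_ww z
  rw [abs_mul, pow_add]
  calc |F z| * |G z| ≤ (C * ww z ^ n) * (D * ww z ^ m) :=
        mul_le_mul (h z) (k z) (abs_nonneg _) (by positivity)
    _ = _ := by ring

lemma PG2.fst : PG2 (fun z => z.1) := by
  refine ⟨1, by norm_num, 1, fun z => ?_⟩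
  unfold ww; nlinarith [abs_nonneg z.1, abs_nonneg z.2, mul_nonneg (abs_nonneg z.1) (abs_nonneg z.2)]

lemma PG2.snd : PG2 (fun z => z.2) := by
  refine ⟨1, by norm_num, 1, fun z => ?_⟩
  unfold ww; nlinarith [abs_nonneg z.1, abs_nonneg z.2, mul_nonneg (abs_nonneg z.1) (abs_nonneg z.2)]

/-- Uniform bound for a polynomially growing function of a contracted combination. -/
lemma pg_comp {h : ℝ → ℝ} (hh : PolyGrowth h) : ∃ C ≥ (0 : ℝ), ∃ n : ℕ,
    ∀ a b : ℝ, |a| ≤ 1 → |b| ≤ 1 → ∀ z : ℝ × ℝ, |h (a * z.1 + b * z.2)| ≤ C * ww z ^ n := by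
  obtain ⟨C, hC, n, H⟩ := hh
  refine ⟨C, hC.le, n, fun a b ha hb z => (H _).trans ?_⟩
  have h1 : |a * z.1 + b * z.2| ≤ |z.1| + |z.2| := by
    refine (abs_add_le _ _).trans ?_
    rw [abs_mul, abs_mul]
    nlinarith [abs_nonneg z.1, abs_nonneg z.2]
  gcongr
  unfold ww; nlinarith [mul_nonneg (abs_nonneg z.1) (abs_nonneg z.2)]

lemma integrable_one_add_abs_pow (n : ℕ) :
    Integrable (fun x : ℝ => (1 + |x|) ^ n) (gaussianReal 0 1) := by
  have h : MemLp (fun x : ℝ => 1 + |x|) n (gaussianReal 0 1) :=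
    (memLp_const (1 : ℝ)).add
      (memLp_id_gaussianReal' (μ := 0) (v := 1) (n : ENNReal) (ENNReal.natCast_ne_top n)).norm
  have := h.integrable_norm_pow'
  refine this.congr (Filter.Eventually.of_forall fun x => ?_)
  simp only [Real.norm_eq_abs]
  rw [abs_of_nonneg (by positivity)]

lemma integrable_ww_pow (n : ℕ) :
    Integrable (fun z => ww z ^ n) ((gaussianReal 0 1).prod (gaussianReal 0 1)) := by
  have := (integrable_one_add_abs_pow n).mul_prod (integrable_one_add_abs_pow n)
  simpa [ww, mul_pow] using this

lemma PG2.integrable {F : ℝ × ℝ → ℝ} (hF : PG2 F) (hc : Continuous F) :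
    Integrable F ((gaussianReal 0 1).prod (gaussianReal 0 1)) := by
  obtain ⟨C, hC, n, h⟩ := hF
  exact ((integrable_ww_pow n).const_mul C).mono' hc.aestronglyMeasurable
    (Filter.Eventually.of_forall h)

lemma integrable_gauss_iff (f : ℝ → ℝ) : Integrable f (gaussianReal 0 1) ↔
    Integrable (fun x => f x * gaussianPDFReal 0 1 x) := by
  rw [gaussianReal_of_var_ne_zero _ one_ne_zero,
    integrable_withDensity_iff (measurable_gaussianPDF _ _)
      (Filter.Eventually.of_forall fun x => by simp [gaussianPDF])]
  simp [toReal_gaussianPDF]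

lemma hasDerivAt_pdf (x : ℝ) :
    HasDerivAt (gaussianPDFReal 0 1) (-x * gaussianPDFReal 0 1 x) x := by
  unfold gaussianPDFReal
  have h : HasDerivAt (fun x : ℝ => -(x - 0) ^ 2 / (2 * ((1 : NNReal) : ℝ))) (-x) x := by
    have := (((hasDerivAt_id x).sub_const 0).pow 2).neg.div_const (2 * ((1 : NNReal) : ℝ))
    refine this.congr_deriv ?_
    simp
    ring
  refine (h.exp.const_mul _).congr_deriv ?_
  ring

lemma stein {f f' : ℝ → ℝ} (hf : ∀ x, HasDerivAt f (f' x) x)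
    (i0 : Integrable f (gaussianReal 0 1)) (i1 : Integrable f' (gaussianReal 0 1))
    (i2 : Integrable (fun x => x * f x) (gaussianReal 0 1)) :
    ∫ x, x * f x ∂(gaussianReal 0 1) = ∫ x, f' x ∂(gaussianReal 0 1) := by
  have hs : ∫ x, (f' x - x * f x) ∂(gaussianReal 0 1) = 0 := by
    rw [integral_gaussianReal_eq_integral_smul one_ne_zero]
    have key := integral_eq_zero_of_hasDerivAt_of_integrable
      (f := fun x => f x * gaussianPDFReal 0 1 x)
      (f' := fun x => (f' x - x * f x) * gaussianPDFReal 0 1 x) (fun x => ?_)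
      ((integrable_gauss_iff _).1 (i1.sub i2)) ((integrable_gauss_iff _).1 i0)
    · simpa [mul_comm] using key
    · refine ((hf x).mul (hasDerivAt_pdf x)).congr_deriv ?_
      ring
  rw [integral_sub i1 i2] at hs
  linarith

theorem phiCorr_hasDerivAt (g : ℝ → ℝ) (hg : ContDiff ℝ 2 g)
    (h0 : PolyGrowth g) (h1 : PolyGrowth (deriv g)) (h2 : PolyGrowth (deriv (deriv g))) :
    ∀ ρ ∈ Set.Ioo (-1 : ℝ) 1,
      HasDerivAt (phiCorr g)
        (∫ x, ∫ y, deriv g x * deriv g (ρ * x + Real.sqrt (1 - ρ ^ 2) * y)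
          ∂(gaussianReal 0 1) ∂(gaussianReal 0 1)) ρ := by
  intro ρ hρ
  have hg1 : ContDiff ℝ 1 (deriv g) := by
    have : ContDiff ℝ (1 + 1) g := by simpa [one_add_one_eq_two] using hg
    exact (contDiff_succ_iff_deriv.1 this).2.2
  have c0 : Continuous g := hg.continuous
  have c1 : Continuous (deriv g) := hg1.continuous
  have c2 : Continuous (deriv (deriv g)) := hg1.continuous_deriv le_rfl
  have d0 : ∀ x, HasDerivAt g (deriv g x) x := fun x =>
    (hg.differentiable (by norm_num) x).hasDerivAt
  have d1 : ∀ x, HasDerivAt (deriv g) (deriv (deriv g) x) x := fun x =>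
    (hg1.differentiable (by norm_num) x).hasDerivAt
  have habs : ∀ r ∈ Set.Ioo (-1 : ℝ) 1, |r| ≤ 1 := fun r hr => abs_le.2 ⟨hr.1.le, hr.2.le⟩
  have hsq : ∀ r : ℝ, |Real.sqrt (1 - r ^ 2)| ≤ 1 := fun r => by
    rw [abs_of_nonneg (Real.sqrt_nonneg _)]
    exact Real.sqrt_le_one.2 (by nlinarith [sq_nonneg r])
  have pfst : ∀ {h : ℝ → ℝ}, PolyGrowth h → PG2 (fun z => h z.1) := fun hh => by
    obtain ⟨C, hC, n, H⟩ := pg_comp hh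
    exact ⟨C, hC, n, fun z => by simpa using H 1 0 (by simp) (by simp) z⟩
  have pcomp : ∀ {h : ℝ → ℝ}, PolyGrowth h → ∀ r ∈ Set.Ioo (-1 : ℝ) 1,
      PG2 (fun z => h (r * z.1 + Real.sqrt (1 - r ^ 2) * z.2)) := fun hh r hr => by
    obtain ⟨C, hC, n, H⟩ := pg_comp hh
    exact ⟨C, hC, n, H r _ (habs r hr) (hsq r)⟩
  have hnhds : Set.Ioo (-1 : ℝ) 1 ∈ nhds ρ := Ioo_mem_nhds hρ.1 hρ.2
  have hpos : ∀ r ∈ Set.Ioo (-1 : ℝ) 1, 0 < 1 - r ^ 2 := fun r hr => by nlinarith [hr.1, hr.2]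
  have hphi : phiCorr g =ᶠ[nhds ρ] fun r => ∫ z : ℝ × ℝ,
      g z.1 * g (r * z.1 + Real.sqrt (1 - r ^ 2) * z.2)
        ∂((gaussianReal 0 1).prod (gaussianReal 0 1)) := by
    filter_upwards [hnhds] with r hr
    rw [integral_prod _ (((pfst h0).mul (pcomp h0 r hr)).integrable (by fun_prop))]
    rfl
  refine HasDerivAt.congr_of_eventuallyEq ?_ hphi
  set P := (gaussianReal 0 1).prod (gaussianReal 0 1) with hP
  set c := (1 - ρ ^ 2) / 2 with hc
  have hc0 : 0 < c := by have := hpos ρ hρ; positivity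
  have hsc : 0 < Real.sqrt c := Real.sqrt_pos.2 hc0
  have hU : Set.Ioo (-1 : ℝ) 1 ∩ {r | c < 1 - r ^ 2} ∈ nhds ρ := by
    refine Filter.inter_mem hnhds ((isOpen_lt (by fun_prop) (by fun_prop)).mem_nhds ?_)
    have := hpos ρ hρ
    simp only [Set.mem_ofPred_eq]; linarith
  -- domination
  obtain ⟨B, hB, n, hbd⟩ := (pfst h0).mul (PG2.mul (F := fun _ => 1) (G := fun _ => 1)
    ⟨1, by simp, 0, by simp⟩ ⟨1, by simp, 0, by simp⟩)
  simp only [mul_one] at hbd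
  obtain ⟨D, hD, m, hdd⟩ := pg_comp h1
  set K := 1 + (Real.sqrt c)⁻¹ with hK
  have hder := (hasDerivAt_integral_of_dominated_loc_of_deriv_le (μ := P) (x₀ := ρ)
    (F := fun r z => g z.1 * g (r * z.1 + Real.sqrt (1 - r ^ 2) * z.2))
    (F' := fun r z => g z.1 * (deriv g (r * z.1 + Real.sqrt (1 - r ^ 2) * z.2) *
      (z.1 - r / Real.sqrt (1 - r ^ 2) * z.2)))
    (bound := fun z => B * D * K * ww z ^ (n + m + 1)) hU
    (Filter.Eventually.of_forall fun r => by
      apply Continuous.aestronglyMeasurable; fun_prop)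
    (((pfst h0).mul (pcomp h0 ρ hρ)).integrable (by fun_prop))
    (by apply Continuous.aestronglyMeasurable; fun_prop)
    (Filter.Eventually.of_forall fun z r hr => ?_)
    ((integrable_ww_pow _).const_mul _)
    (Filter.Eventually.of_forall fun z r hr => ?_)).2
  rotate_left
  · have hw := one_le_ww z
    have e1 : |z.1 - r / Real.sqrt (1 - r ^ 2) * z.2| ≤ K * ww z := by
      have hq : |r / Real.sqrt (1 - r ^ 2)| ≤ (Real.sqrt c)⁻¹ := by
        rw [abs_div, abs_of_nonneg (Real.sqrt_nonneg _), ← one_div]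
        exact div_le_div₀ zero_le_one (habs r hr.1) hsc (Real.sqrt_le_sqrt (le_of_lt hr.2))
      have hx : |z.1| ≤ ww z := by
        unfold ww
        nlinarith [abs_nonneg z.1, abs_nonneg z.2, mul_nonneg (abs_nonneg z.1) (abs_nonneg z.2)]
      have hy : |z.2| ≤ ww z := by
        unfold ww
        nlinarith [abs_nonneg z.1, abs_nonneg z.2, mul_nonneg (abs_nonneg z.1) (abs_nonneg z.2)]
      refine (abs_sub _ _).trans ?_
      rw [abs_mul, hK, add_mul, one_mul]
      gcongr
    have hK0 : 0 ≤ K := by positivity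
    rw [Real.norm_eq_abs, abs_mul, abs_mul]
    calc _ ≤ (B * ww z ^ n) * ((D * ww z ^ m) * (K * ww z)) := by
          gcongr
          · exact hbd z
          · exact hdd r _ (habs r hr.1) (hsq r) z
      _ = _ := by ring
  · have hr0 := hpos r hr.1
    have hs0 := Real.sqrt_pos.2 hr0
    have hin : HasDerivAt (fun r : ℝ => r * z.1 + Real.sqrt (1 - r ^ 2) * z.2)
        (z.1 - r / Real.sqrt (1 - r ^ 2) * z.2) r := by
      have hs : HasDerivAt (fun r : ℝ => 1 - r ^ 2) (-(2 * r)) r := by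
        simpa using ((hasDerivAt_id r).pow 2).const_sub 1
      refine (((hasDerivAt_id r).mul_const z.1).add
        ((hs.sqrt hr0.ne').mul_const z.2)).congr_deriv ?_
      field_simp
      ring
    exact ((d0 _).comp r hin).const_mul _
  convert hder using 1
  set s := Real.sqrt (1 - ρ ^ 2) with hs
  have hs0 : 0 < s := Real.sqrt_pos.2 (hpos ρ hρ)
  have q11 := (pfst h1).mul (pcomp h1 ρ hρ)
  have q01 := (pfst h0).mul (pcomp h1 ρ hρ)
  have q02 := (pfst h0).mul (pcomp h2 ρ hρ)
  have I11 : Integrable (fun z : ℝ × ℝ => deriv g z.1 * deriv g (ρ * z.1 + s * z.2)) P :=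
    q11.integrable (by fun_prop)
  have I01 : Integrable (fun z : ℝ × ℝ => g z.1 * deriv g (ρ * z.1 + s * z.2)) P :=
    q01.integrable (by fun_prop)
  have I02 : Integrable (fun z : ℝ × ℝ => g z.1 * deriv (deriv g) (ρ * z.1 + s * z.2)) P :=
    q02.integrable (by fun_prop)
  have Ix : Integrable (fun z : ℝ × ℝ => z.1 * (g z.1 * deriv g (ρ * z.1 + s * z.2))) P :=
    (PG2.fst.mul q01).integrable (by fun_prop)
  have Iy : Integrable (fun z : ℝ × ℝ => z.2 * (g z.1 * deriv g (ρ * z.1 + s * z.2))) P :=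
    (PG2.snd.mul q01).integrable (by fun_prop)
  have Isum : Integrable (fun z : ℝ × ℝ => deriv g z.1 * deriv g (ρ * z.1 + s * z.2) +
      ρ * (g z.1 * deriv (deriv g) (ρ * z.1 + s * z.2))) P := I11.add (I02.const_mul ρ)
  have Is : Integrable (fun z : ℝ × ℝ =>
      s * (g z.1 * deriv (deriv g) (ρ * z.1 + s * z.2))) P := I02.const_mul s
  have E1 : ∫ z, z.1 * (g z.1 * deriv g (ρ * z.1 + s * z.2)) ∂P =
      ∫ z, (deriv g z.1 * deriv g (ρ * z.1 + s * z.2) +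
        ρ * (g z.1 * deriv (deriv g) (ρ * z.1 + s * z.2))) ∂P := by
    rw [hP, integral_prod_symm _ Ix, integral_prod_symm _ Isum]
    apply integral_congr_ae
    filter_upwards [I01.prod_left_ae, Ix.prod_left_ae, Isum.prod_left_ae] with y j0 j1 j2
    refine stein (fun x => ?_) j0 j2 j1
    have hin : HasDerivAt (fun x : ℝ => ρ * x + s * y) ρ x := by
      simpa using ((hasDerivAt_id x).const_mul ρ).add_const (s * y)
    refine ((d0 x).mul ((d1 _).comp x hin)).congr_deriv ?_
    simp only [Function.comp]; ring
  have E2 : ∫ z, z.2 * (g z.1 * deriv g (ρ * z.1 + s * z.2)) ∂P =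
      ∫ z, s * (g z.1 * deriv (deriv g) (ρ * z.1 + s * z.2)) ∂P := by
    rw [hP, integral_prod _ Iy, integral_prod _ Is]
    apply integral_congr_ae
    filter_upwards [I01.prod_right_ae, Iy.prod_right_ae, Is.prod_right_ae] with x j0 j1 j2
    refine stein (fun y => ?_) j0 j2 j1
    have hin : HasDerivAt (fun y : ℝ => ρ * x + s * y) s y := by
      simpa using ((hasDerivAt_id y).const_mul s).const_add (ρ * x)
    refine (((d1 _).comp y hin).const_mul (g x)).congr_deriv ?_
    ring
  have E3 : ∫ z : ℝ × ℝ, g z.1 * (deriv g (ρ * z.1 + s * z.2) * (z.1 - ρ / s * z.2)) ∂P =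
      ∫ z, z.1 * (g z.1 * deriv g (ρ * z.1 + s * z.2)) ∂P -
        ρ / s * ∫ z, z.2 * (g z.1 * deriv g (ρ * z.1 + s * z.2)) ∂P := by
    rw [← integral_const_mul, ← integral_sub Ix (Iy.const_mul _)]
    congr 1; ext z; ring
  rw [E3, E1, E2, integral_add I11 (I02.const_mul ρ), integral_const_mul, integral_const_mul,
    hP, integral_prod _ I11]
  field_simp
  ring
end

section
/- Let g : ℝ → ℝ be twice continuously differentiable and nondecreasing (equivalently, g'(x) ≥ 0 for all x), such that g, g' and g'' have at most polynomial growth. Then φ_g is nondecreasing on [−1,1]; in particular φ_g(−1) ≤ φ_g(ρ) for every ρ ∈ [−1,1], i.e. φ_g attains its minimum over [−1,1] at ρ = −1. -/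
open MeasureTheory ProbabilityTheory

/-- The dominating weight on the plane. -/
noncomputable def wt (p : ℝ × ℝ) : ℝ := (1 + |p.1|) * (1 + |p.2|)

lemma wt_integrable (N : ℕ) :
    Integrable (fun p => wt p ^ N) ((gaussianReal 0 1).prod (gaussianReal 0 1)) := by
  have h : Integrable (fun x : ℝ => (1 + |x|) ^ N) (gaussianReal 0 1) := by
    have h1 : MemLp (fun x : ℝ => 1 + |x|) (N : ENNReal) (gaussianReal 0 1) :=
      (memLp_const (1 : ℝ)).add (memLp_id_gaussianReal' (N : ENNReal) (by simp)).norm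
    have h2 := h1.integrable_norm_pow'
    refine h2.congr (Filter.Eventually.of_forall fun x => ?_)
    simp only [Real.norm_eq_abs]
    rw [abs_of_nonneg (by positivity)]
  refine (h.mul_prod h).congr (Filter.Eventually.of_forall fun p => ?_)
  simp only [wt, mul_pow]

lemma integrable_of_wt {f : ℝ × ℝ → ℝ} (hf : Continuous f) {C : ℝ} {N : ℕ}
    (h : ∀ p, |f p| ≤ C * wt p ^ N) :
    Integrable f ((gaussianReal 0 1).prod (gaussianReal 0 1)) :=
  ((wt_integrable N).const_mul C).mono' hf.aestronglyMeasurable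
    (Filter.Eventually.of_forall h)

lemma wt_ge (p : ℝ × ℝ) : 1 + (|p.1| + |p.2|) ≤ wt p := by
  unfold wt
  nlinarith [mul_nonneg (abs_nonneg p.1) (abs_nonneg p.2)]

lemma wt_ge_one (p : ℝ × ℝ) : 1 ≤ wt p := by
  have := wt_ge p
  linarith [abs_nonneg p.1, abs_nonneg p.2]

lemma abs_comb {a b x y : ℝ} (ha : |a| ≤ 1) (hb : |b| ≤ 1) : |a * x + b * y| ≤ |x| + |y| := by
  refine (abs_add_le _ _).trans ?_
  rw [abs_mul, abs_mul]
  have := mul_le_mul_of_nonneg_right ha (abs_nonneg x)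
  have := mul_le_mul_of_nonneg_right hb (abs_nonneg y)
  linarith

lemma growth_wt {h : ℝ → ℝ} {C : ℝ} (hC : 0 < C) {m : ℕ}
    (hh : ∀ x : ℝ, |h x| ≤ C * (1 + |x|) ^ m) (p : ℝ × ℝ) {z : ℝ} (hz : |z| ≤ |p.1| + |p.2|) :
    |h z| ≤ C * wt p ^ m := by
  refine (hh z).trans ?_
  have := wt_ge p
  gcongr
  linarith

/-- A bound for products of three factors of polynomial growth. -/
lemma prod_bound {g k : ℝ → ℝ} {C D : ℝ} (hC : 0 < C) (hD : 0 < D) {m n : ℕ}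
    (hg : ∀ x : ℝ, |g x| ≤ C * (1 + |x|) ^ m) (hk : ∀ x : ℝ, |k x| ≤ D * (1 + |x|) ^ n)
    (p : ℝ × ℝ) {z w v : ℝ} (hz : |z| ≤ |p.1| + |p.2|) (hw : |w| ≤ |p.1| + |p.2|)
    (hv : |v| ≤ |p.1| + |p.2|) :
    |g z * k w * v| ≤ (C * D) * wt p ^ (m + n + 1) := by
  have a := growth_wt hC hg p hz
  have b := growth_wt hD hk p hw
  have c : |v| ≤ wt p := by linarith [wt_ge p]
  have := wt_ge_one p
  rw [abs_mul, abs_mul]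
  calc |g z| * |k w| * |v| ≤ (C * wt p ^ m) * (D * wt p ^ n) * wt p := by gcongr
    _ = _ := by ring

lemma prod_bound2 {g k : ℝ → ℝ} {C D : ℝ} (hC : 0 < C) (hD : 0 < D) {m n : ℕ}
    (hg : ∀ x : ℝ, |g x| ≤ C * (1 + |x|) ^ m) (hk : ∀ x : ℝ, |k x| ≤ D * (1 + |x|) ^ n)
    (p : ℝ × ℝ) {z w : ℝ} (hz : |z| ≤ |p.1| + |p.2|) (hw : |w| ≤ |p.1| + |p.2|) :
    |g z * k w| ≤ (C * D) * wt p ^ (m + n) := by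
  have a := growth_wt hC hg p hz
  have b := growth_wt hD hk p hw
  have := wt_ge_one p
  rw [abs_mul]
  calc |g z| * |k w| ≤ (C * wt p ^ m) * (D * wt p ^ n) := by gcongr
    _ = _ := by ring

/-- The functional in the angular variable. -/
noncomputable def angF (g : ℝ → ℝ) (θ : ℝ) : ℝ :=
  ∫ p : ℝ × ℝ, g p.1 * g (Real.cos θ * p.1 + Real.sin θ * p.2)
    ∂((gaussianReal 0 1).prod (gaussianReal 0 1))

lemma abs_fst_le (p : ℝ × ℝ) : |p.1| ≤ |p.1| + |p.2| := by linarith [abs_nonneg p.2]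
lemma abs_snd_le (p : ℝ × ℝ) : |p.2| ≤ |p.1| + |p.2| := by linarith [abs_nonneg p.1]

lemma angF_integrable {g : ℝ → ℝ} (hg : Continuous g) (h0 : PolyGrowth g) (θ : ℝ) :
    Integrable (fun p : ℝ × ℝ => g p.1 * g (Real.cos θ * p.1 + Real.sin θ * p.2))
      ((gaussianReal 0 1).prod (gaussianReal 0 1)) := by
  obtain ⟨C, hC, m, h0⟩ := h0
  exact integrable_of_wt (by fun_prop) fun p => prod_bound2 hC hC h0 h0 p (abs_fst_le p)
    (abs_comb (Real.abs_cos_le_one θ) (Real.abs_sin_le_one θ))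

lemma angF_hasDerivAt {g : ℝ → ℝ} (hd : Differentiable ℝ g) (hc : Continuous (deriv g))
    (h0 : PolyGrowth g) (h1 : PolyGrowth (deriv g)) (θ : ℝ) :
    HasDerivAt (angF g) (∫ p : ℝ × ℝ, g p.1 * deriv g (Real.cos θ * p.1 + Real.sin θ * p.2)
      * (-Real.sin θ * p.1 + Real.cos θ * p.2)
      ∂((gaussianReal 0 1).prod (gaussianReal 0 1))) θ := by
  have hg := hd.continuous
  have hint := angF_integrable hg h0 θ
  obtain ⟨C, hC, m, h0⟩ := h0
  obtain ⟨D, hD, n, h1⟩ := h1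
  refine (hasDerivAt_integral_of_dominated_loc_of_deriv_le
    (F := fun θ (p : ℝ × ℝ) => g p.1 * g (Real.cos θ * p.1 + Real.sin θ * p.2))
    (F' := fun θ (p : ℝ × ℝ) => g p.1 * deriv g (Real.cos θ * p.1 + Real.sin θ * p.2)
      * (-Real.sin θ * p.1 + Real.cos θ * p.2))
    (bound := fun p => (C * D) * wt p ^ (m + n + 1))
    (s := Set.univ) Filter.univ_mem ?_ hint ?_ ?_ ?_ ?_).2
  · refine Filter.Eventually.of_forall fun t => Continuous.aestronglyMeasurable (by fun_prop)
  · exact Continuous.aestronglyMeasurable (by fun_prop)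
  · refine Filter.Eventually.of_forall fun p t _ => ?_
    exact prod_bound hC hD h0 h1 p (abs_fst_le p)
      (abs_comb (Real.abs_cos_le_one t) (Real.abs_sin_le_one t))
      (abs_comb (by rw [abs_neg]; exact Real.abs_sin_le_one t) (Real.abs_cos_le_one t))
  · exact (wt_integrable _).const_mul _
  · refine Filter.Eventually.of_forall fun p t _ => ?_
    have h := ((Real.hasDerivAt_cos t).mul_const p.1).add ((Real.hasDerivAt_sin t).mul_const p.2)
    have h2 := ((hd (Real.cos t * p.1 + Real.sin t * p.2)).hasDerivAt.comp t h).const_mul (g p.1)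
    rw [← mul_assoc] at h2
    exact h2

lemma angF_deriv_nonpos {g : ℝ → ℝ} (hd : Differentiable ℝ g) (hc : Continuous (deriv g))
    (hmono : ∀ x, 0 ≤ deriv g x)
    (h0 : PolyGrowth g) (h1 : PolyGrowth (deriv g)) (θ : ℝ) (hs : 0 ≤ Real.sin θ) :
    ∫ p : ℝ × ℝ, g p.1 * deriv g (Real.cos θ * p.1 + Real.sin θ * p.2)
      * (-Real.sin θ * p.1 + Real.cos θ * p.2)
      ∂((gaussianReal 0 1).prod (gaussianReal 0 1)) ≤ 0 := by
  have hg := hd.continuous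
  have hm : Monotone g := monotone_of_deriv_nonneg hd hmono
  obtain ⟨C, hC, m, h0⟩ := h0
  obtain ⟨D, hD, n, h1⟩ := h1
  have hrot := IsGaussian.map_rotation_eq_self (μ := gaussianReal 0 1) (by simp) θ
  set K : ℝ × ℝ → ℝ := fun q => g (Real.cos θ * q.1 + (-Real.sin θ) * q.2) * deriv g q.1 * q.2
    with hK
  have hKc : Continuous K := by fun_prop
  have e1 : ∫ p : ℝ × ℝ, g p.1 * deriv g (Real.cos θ * p.1 + Real.sin θ * p.2)
      * (-Real.sin θ * p.1 + Real.cos θ * p.2)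
      ∂((gaussianReal 0 1).prod (gaussianReal 0 1))
      = ∫ q, K q ∂((gaussianReal 0 1).prod (gaussianReal 0 1)) := by
    conv_rhs => rw [← hrot]
    rw [integral_map (by fun_prop) hKc.aestronglyMeasurable]
    refine integral_congr_ae (Filter.Eventually.of_forall fun p => ?_)
    simp only [hK, ContinuousLinearMap.rotation_apply, smul_eq_mul]
    congr 3
    linear_combination (-p.1) * Real.sin_sq_add_cos_sq θ
  rw [e1]
  have e2 : ∫ q : ℝ × ℝ, (g (Real.cos θ * q.1) * deriv g q.1) * q.2
      ∂((gaussianReal 0 1).prod (gaussianReal 0 1)) = 0 := by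
    rw [integral_prod_mul (fun x => g (Real.cos θ * x) * deriv g x) (fun y => y)]
    simp
  refine le_of_le_of_eq (integral_mono ?_ ?_ ?_) e2
  · exact integrable_of_wt hKc fun p => prod_bound hC hD h0 h1 p
      (abs_comb (Real.abs_cos_le_one θ) (by rw [abs_neg]; exact Real.abs_sin_le_one θ))
      (abs_fst_le p) (abs_snd_le p)
  · refine integrable_of_wt (by fun_prop) fun p => prod_bound hC hD h0 h1 p
      ?_ (abs_fst_le p) (abs_snd_le p)
    simpa using abs_comb (a := Real.cos θ) (b := 0) (x := p.1) (y := p.2)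
      (Real.abs_cos_le_one θ) (by simp)
  · intro q
    simp only [hK]
    rcases le_total 0 q.2 with h | h
    · have := hm (show Real.cos θ * q.1 + (-Real.sin θ) * q.2 ≤ Real.cos θ * q.1 by
        nlinarith [mul_nonneg hs h])
      nlinarith [mul_nonneg (mul_nonneg (sub_nonneg.2 this) (hmono q.1)) h]
    · have := hm (show Real.cos θ * q.1 ≤ Real.cos θ * q.1 + (-Real.sin θ) * q.2 by
        nlinarith [mul_nonneg hs (neg_nonneg.2 h)])
      nlinarith [mul_nonneg (mul_nonneg (sub_nonneg.2 this) (hmono q.1)) (neg_nonneg.2 h)]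

lemma phiCorr_eq_angF {g : ℝ → ℝ} (hg : Continuous g) (h0 : PolyGrowth g) {ρ : ℝ}
    (hρ : ρ ∈ Set.Icc (-1 : ℝ) 1) : phiCorr g ρ = angF g (Real.arccos ρ) := by
  unfold angF
  rw [integral_prod _ (angF_integrable hg h0 _), Real.cos_arccos hρ.1 hρ.2, Real.sin_arccos]
  rfl

theorem phiCorr_monotoneOn (g : ℝ → ℝ) (hg : ContDiff ℝ 2 g) (hmono : ∀ x, 0 ≤ deriv g x)
    (h0 : PolyGrowth g) (h1 : PolyGrowth (deriv g)) (h2 : PolyGrowth (deriv (deriv g))) :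
    MonotoneOn (phiCorr g) (Set.Icc (-1 : ℝ) 1) ∧
    ∀ ρ ∈ Set.Icc (-1 : ℝ) 1, phiCorr g (-1) ≤ phiCorr g ρ := by
  have hd : Differentiable ℝ g := hg.differentiable (by norm_num)
  have hc : Continuous (deriv g) := hg.continuous_deriv (by norm_num)
  have hD := angF_hasDerivAt hd hc h0 h1
  have hanti : AntitoneOn (angF g) (Set.Icc 0 Real.pi) := by
    refine antitoneOn_of_deriv_nonpos (convex_Icc _ _)
      (fun t _ => (hD t).continuousAt.continuousWithinAt)
      (fun t _ => (hD t).differentiableAt.differentiableWithinAt) fun t ht => ?_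
    rw [(hD t).deriv]
    have ht' := interior_subset ht
    exact angF_deriv_nonpos hd hc hmono h0 h1 t (Real.sin_nonneg_of_nonneg_of_le_pi ht'.1 ht'.2)
  have hM : MonotoneOn (phiCorr g) (Set.Icc (-1 : ℝ) 1) := by
    intro a ha b hb hab
    rw [phiCorr_eq_angF hd.continuous h0 ha, phiCorr_eq_angF hd.continuous h0 hb]
    exact hanti ⟨Real.arccos_nonneg _, Real.arccos_le_pi _⟩
      ⟨Real.arccos_nonneg _, Real.arccos_le_pi _⟩ (Real.antitone_arccos hab)
  exact ⟨hM, fun ρ hρ => hM (by norm_num) hρ hρ.1⟩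
end

section
/- (Optimality of the antithetic coupling for one-dimensional Black–Scholes with constant correlation.) Let b ∈ ℝ, σ > 0, T > 0, and let f : ℝ → ℝ be nondecreasing and twice continuously differentiable such that the function g(x) = f(exp((b − σ²/2)T + σ√T · x)) together with g' and g'' has at most polynomial growth. For ρ ∈ [−1,1] define Φ(ρ) = ∫∫ f(exp((b − σ²/2)T + σ√T x)) · f(exp((b − σ²/2)T + σ√T (ρx + √(1−ρ²) y))) dγ(x) dγ(y). Then Φ(−1) ≤ Φ(ρ) for every ρ ∈ [−1,1], i.e. the constant correlation ρ* = −1 minimizes Φ over [−1,1]. -/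
open MeasureTheory ProbabilityTheory

/-- `Φ(ρ) = E[f(X¹_T) f(X²_T)]` for two Black–Scholes prices driven by Brownian motions
with constant correlation `ρ`. -/
noncomputable def PhiBS (b σ T : ℝ) (f : ℝ → ℝ) (ρ : ℝ) : ℝ :=
  ∫ x, ∫ y, f (Real.exp ((b - σ ^ 2 / 2) * T + σ * Real.sqrt T * x)) *
      f (Real.exp ((b - σ ^ 2 / 2) * T + σ * Real.sqrt T * (ρ * x + Real.sqrt (1 - ρ ^ 2) * y)))
    ∂(gaussianReal 0 1) ∂(gaussianReal 0 1)

lemma PolyGrowth.mul {g h : ℝ → ℝ} (hg : PolyGrowth g) (hh : PolyGrowth h) :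
    PolyGrowth (fun x => g x * h x) := by
  obtain ⟨C, hC, m, hm⟩ := hg
  obtain ⟨D, hD, n, hn⟩ := hh
  refine ⟨C * D, by positivity, m + n, fun x => ?_⟩
  rw [abs_mul, pow_add]
  calc |g x| * |h x| ≤ (C * (1 + |x|) ^ m) * (D * (1 + |x|) ^ n) :=
        mul_le_mul (hm x) (hn x) (abs_nonneg _) (by positivity)
    _ = _ := by ring

lemma PolyGrowth.comp_neg {g : ℝ → ℝ} (hg : PolyGrowth g) : PolyGrowth (fun x => g (-x)) := by
  obtain ⟨C, hC, m, hm⟩ := hg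
  exact ⟨C, hC, m, fun x => by simpa using hm (-x)⟩

lemma PolyGrowth.primitive {h : ℝ → ℝ} (hh : PolyGrowth h) :
    PolyGrowth (fun x => ∫ t in (0:ℝ)..x, h t) := by
  obtain ⟨C, hC, m, hm⟩ := hh
  refine ⟨C, hC, m + 1, fun x => ?_⟩
  have hx : ∀ t ∈ Set.uIoc 0 x, ‖h t‖ ≤ C * (1 + |x|) ^ m := by
    intro t ht
    have hle : |t| ≤ |x| := by
      have := Set.abs_sub_left_of_mem_uIcc (Set.uIoc_subset_uIcc ht)
      simpa using this
    refine (hm t).trans ?_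
    gcongr
  have := intervalIntegral.norm_integral_le_of_norm_le_const hx
  rw [Real.norm_eq_abs, sub_zero] at this
  refine this.trans ?_
  rw [pow_succ, ← mul_assoc]
  gcongr
  linarith

lemma PolyGrowth.integrable {g : ℝ → ℝ} (hg : PolyGrowth g) (hc : Continuous g) :
    Integrable g (gaussianReal 0 1) := by
  obtain ⟨C, hC, m, hm⟩ := hg
  have h1 : MemLp (fun x : ℝ => 1 + |x|) m (gaussianReal 0 1) := by
    refine (memLp_const (1:ℝ)).add ?_
    exact (memLp_id_gaussianReal' (m : ENNReal) (by simp)).norm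
  have h2 := (h1.integrable_norm_pow').const_mul C
  refine h2.mono' hc.aestronglyMeasurable (Filter.Eventually.of_forall fun x => ?_)
  have : ‖(1 + |x|)‖ = 1 + |x| := by rw [Real.norm_eq_abs, abs_of_nonneg (by positivity)]
  simp only [this]
  exact hm x

lemma PolyGrowth.memLp_two {g : ℝ → ℝ} (hg : PolyGrowth g) (hc : Continuous g) :
    MemLp g 2 (gaussianReal 0 1) := by
  rw [memLp_two_iff_integrable_sq hc.aestronglyMeasurable]
  have := (hg.mul hg).integrable (hc.mul hc)
  simpa [pow_two] using this

lemma mp_rot (ρ : ℝ) (hρ : ρ ∈ Set.Icc (-1 : ℝ) 1) :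
    MeasurePreserving (fun p : ℝ × ℝ => ρ * p.1 + Real.sqrt (1 - ρ ^ 2) * p.2)
      ((gaussianReal 0 1).prod (gaussianReal 0 1)) (gaussianReal 0 1) := by
  refine ⟨by fun_prop, ?_⟩
  have hi := indepFun_prod (μ := gaussianReal 0 1) (ν := gaussianReal 0 1)
    (X := fun x : ℝ => ρ * x) (Y := fun y : ℝ => Real.sqrt (1 - ρ ^ 2) * y)
    (by fun_prop) (by fun_prop)
  have hX : ((gaussianReal 0 1).prod (gaussianReal 0 1)).map (fun p : ℝ × ℝ => ρ * p.1)
      = gaussianReal (ρ * 0) (.mk (ρ ^ 2) (sq_nonneg _) * 1) := by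
    have h1 : MeasurePreserving (ρ * ·) (gaussianReal 0 1) _ :=
      ⟨by fun_prop, gaussianReal_map_const_mul ρ⟩
    exact (h1.comp (measurePreserving_fst (μ := gaussianReal 0 1) (ν := gaussianReal 0 1))).map_eq
  have hY : ((gaussianReal 0 1).prod (gaussianReal 0 1)).map
      (fun p : ℝ × ℝ => Real.sqrt (1 - ρ ^ 2) * p.2)
      = gaussianReal (Real.sqrt (1 - ρ ^ 2) * 0)
        (.mk (Real.sqrt (1 - ρ ^ 2) ^ 2) (sq_nonneg _) * 1) := by
    have h1 : MeasurePreserving ((Real.sqrt (1 - ρ ^ 2)) * ·) (gaussianReal 0 1) _ :=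
      ⟨by fun_prop, gaussianReal_map_const_mul (Real.sqrt (1 - ρ ^ 2))⟩
    exact (h1.comp (measurePreserving_snd (μ := gaussianReal 0 1) (ν := gaussianReal 0 1))).map_eq
  have h := gaussianReal_add_gaussianReal_of_indepFun hi hX hY
  have hs : (0:ℝ) ≤ 1 - ρ ^ 2 := by nlinarith [hρ.1, hρ.2]
  refine Eq.trans h ?_
  congr 1
  · simp
  · ext
    simp [Real.sq_sqrt hs]

lemma dual_ineq {g : ℝ → ℝ} (hg : ContDiff ℝ 1 g) (hm : Monotone g) (x z : ℝ) :
    (∫ t in (0:ℝ)..x, deriv g t * g (-t)) +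
      (g z * g (-z) - ∫ t in (0:ℝ)..(-z), deriv g t * g (-t)) ≤ g x * g z := by
  have hc := hg.continuous
  have hd : Continuous (deriv g) := hg.continuous_deriv (le_refl _)
  have hk : Continuous (fun t => deriv g t * g (-t)) := by fun_prop
  have e1 : (∫ t in (0:ℝ)..x, deriv g t * g (-t)) - (∫ t in (0:ℝ)..(-z), deriv g t * g (-t))
      = ∫ t in (-z)..x, deriv g t * g (-t) :=
    intervalIntegral.integral_interval_sub_left (hk.intervalIntegrable _ _)
      (hk.intervalIntegrable _ _)
  have e2 : ∫ t in (-z)..x, deriv g t * g z = (g x - g (-z)) * g z := by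
    rw [intervalIntegral.integral_mul_const, intervalIntegral.integral_deriv_eq_sub
      (fun t _ => (hg.differentiable (by simp)) t) (hd.intervalIntegrable _ _)]
  have hk2 : Continuous (fun t => deriv g t * g z) := by fun_prop
  have key : ∫ t in (-z)..x, deriv g t * g (-t) ≤ ∫ t in (-z)..x, deriv g t * g z := by
    rcases le_total (-z) x with h | h
    · refine intervalIntegral.integral_mono_on h (hk.intervalIntegrable _ _)
        (hk2.intervalIntegrable _ _) fun t ht => ?_
      exact mul_le_mul_of_nonneg_left (hm (by linarith [ht.1])) hm.deriv_nonneg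
    · rw [intervalIntegral.integral_symm x, intervalIntegral.integral_symm x, neg_le_neg_iff]
      refine intervalIntegral.integral_mono_on h (hk2.intervalIntegrable _ _)
        (hk.intervalIntegrable _ _) fun t ht => ?_
      exact mul_le_mul_of_nonneg_left (hm (by linarith [ht.2])) hm.deriv_nonneg
  linarith

lemma anti_opt {g : ℝ → ℝ} (hg : ContDiff ℝ 1 g) (hm : Monotone g) (h0 : PolyGrowth g)
    (h1 : PolyGrowth (deriv g)) (ρ : ℝ) (hρ : ρ ∈ Set.Icc (-1 : ℝ) 1) :
    ∫ x, g x * g (-x) ∂(gaussianReal 0 1) ≤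
      ∫ x, ∫ y, g x * g (ρ * x + Real.sqrt (1 - ρ ^ 2) * y)
        ∂(gaussianReal 0 1) ∂(gaussianReal 0 1) := by
  have hc := hg.continuous
  have hd : Continuous (deriv g) := hg.continuous_deriv (le_refl _)
  have hk : Continuous (fun t => deriv g t * g (-t)) := by fun_prop
  have hmp := mp_rot ρ hρ
  set Z := (fun p : ℝ × ℝ => ρ * p.1 + Real.sqrt (1 - ρ ^ 2) * p.2) with hZ
  set u : ℝ → ℝ := fun x => ∫ t in (0:ℝ)..x, deriv g t * g (-t) with hu
  have huc : Continuous u := intervalIntegral.continuous_primitive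
    (fun a b => hk.intervalIntegrable a b) 0
  have hup : PolyGrowth u := (h1.mul h0.comp_neg).primitive
  have hui := hup.integrable huc
  have huni := hup.comp_neg.integrable (huc.comp continuous_neg)
  have hggi : Integrable (fun x => g x * g (-x)) (gaussianReal 0 1) :=
    (h0.mul h0.comp_neg).integrable (by fun_prop)
  set v : ℝ → ℝ := fun z => g z * g (-z) - u (-z) with hv
  have hvi : Integrable v (gaussianReal 0 1) := hggi.sub huni
  have hneg : ∫ z, u (-z) ∂(gaussianReal 0 1) = ∫ z, u z ∂(gaussianReal 0 1) := by
    have := integral_map (μ := gaussianReal 0 1) (φ := fun x : ℝ => -x) (f := u)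
      (by fun_prop) huc.aestronglyMeasurable
    rw [← this, gaussianReal_map_neg, neg_zero]
  have hF : Integrable (fun p : ℝ × ℝ => g p.1 * g (Z p))
      ((gaussianReal 0 1).prod (gaussianReal 0 1)) := by
    have hL := h0.memLp_two hc
    exact (hL.comp_measurePreserving measurePreserving_fst).integrable_mul
      (hL.comp_measurePreserving hmp)
  have hu1 : Integrable (fun p : ℝ × ℝ => u p.1)
      ((gaussianReal 0 1).prod (gaussianReal 0 1)) :=
    measurePreserving_fst.integrable_comp_of_integrable hui
  have hv1 : Integrable (fun p : ℝ × ℝ => v (Z p))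
      ((gaussianReal 0 1).prod (gaussianReal 0 1)) :=
    hmp.integrable_comp_of_integrable hvi
  have iu : ∫ p : ℝ × ℝ, u p.1 ∂((gaussianReal 0 1).prod (gaussianReal 0 1))
      = ∫ x, u x ∂(gaussianReal 0 1) := by
    rw [← integral_map (φ := Prod.fst) (by fun_prop) huc.aestronglyMeasurable,
      measurePreserving_fst.map_eq]
  have iv : ∫ p : ℝ × ℝ, v (Z p) ∂((gaussianReal 0 1).prod (gaussianReal 0 1))
      = ∫ x, v x ∂(gaussianReal 0 1) := by
    rw [← integral_map (φ := Z) hmp.aemeasurable (by rw [hmp.map_eq]; exact hvi.1), hmp.map_eq]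
  have hmain : ∫ p : ℝ × ℝ, (u p.1 + v (Z p)) ∂((gaussianReal 0 1).prod (gaussianReal 0 1))
      ≤ ∫ p : ℝ × ℝ, g p.1 * g (Z p) ∂((gaussianReal 0 1).prod (gaussianReal 0 1)) :=
    integral_mono (hu1.add hv1) hF fun p => dual_ineq hg hm p.1 (Z p)
  rw [integral_add hu1 hv1, iu, iv, hv, integral_sub hggi huni, hneg, integral_prod _ hF] at hmain
  simpa using hmain

theorem antithetic_optimal_blackScholes (b σ T : ℝ) (hσ : 0 < σ) (hT : 0 < T)
    (f : ℝ → ℝ) (hfmono : Monotone f) (hf : ContDiff ℝ 2 f)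
    (h0 : PolyGrowth (fun x => f (Real.exp ((b - σ ^ 2 / 2) * T + σ * Real.sqrt T * x))))
    (h1 : PolyGrowth (deriv (fun x => f (Real.exp ((b - σ ^ 2 / 2) * T + σ * Real.sqrt T * x)))))
    (h2 : PolyGrowth (deriv (deriv
      (fun x => f (Real.exp ((b - σ ^ 2 / 2) * T + σ * Real.sqrt T * x)))))) :
    ∀ ρ ∈ Set.Icc (-1 : ℝ) 1, PhiBS b σ T f (-1) ≤ PhiBS b σ T f ρ := by
  intro ρ hρ
  set g : ℝ → ℝ := fun x => f (Real.exp ((b - σ ^ 2 / 2) * T + σ * Real.sqrt T * x)) with hgdef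
  have hg : ContDiff ℝ 1 g := by
    have hf1 : ContDiff ℝ 1 f := hf.of_le (by norm_num)
    exact hf1.comp (by fun_prop)
  have hm : Monotone g := by
    intro x y hxy
    apply hfmono
    gcongr
  have key := anti_opt hg hm h0 h1 ρ hρ
  have e : PhiBS b σ T f (-1) = ∫ x, g x * g (-x) ∂(gaussianReal 0 1) := by
    simp [PhiBS, hgdef]
  rw [e]
  exact key
end

section
/- (Antithetic variance reduction.) Let g : ℝ → ℝ be twice continuously differentiable and nondecreasing, such that g, g' and g'' have at most polynomial growth, and let Z be a standard Gaussian random variable on a probability space. Then Var((g(Z) + g(−Z))/2) ≤ (1/2) Var(g(Z)). -/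
open MeasureTheory ProbabilityTheory

lemma polyGrowth_memLp {g : ℝ → ℝ} (hc : Continuous g) (h0 : PolyGrowth g) :
    MemLp g 2 (gaussianReal 0 1) := by
  obtain ⟨C, hC, m, h⟩ := h0
  have h1 : MemLp (fun x : ℝ => 1 + |x|) ((m : ENNReal) * 2) (gaussianReal 0 1) := by
    apply MemLp.add
    · exact memLp_const 1
    · exact (memLp_id_gaussianReal' _ (by finiteness)).abs
  have h2 : MemLp (fun x : ℝ => C * (1 + |x|) ^ m) 2 (gaussianReal 0 1) := by
    apply MemLp.const_mul
    rcases Nat.eq_zero_or_pos m with rfl | hm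
    · simpa using memLp_const (1 : ℝ)
    · have h3 := h1.norm_rpow_div (m : ENNReal)
      have e : (m : ENNReal) * 2 / m = 2 := by
        rw [mul_comm]
        exact ENNReal.mul_div_cancel_right (by simpa using hm.ne') (by simp)
      rw [e] at h3
      refine h3.congr_norm (by fun_prop) ?_
      refine Filter.Eventually.of_forall fun x => ?_
      simp
  refine h2.mono hc.aestronglyMeasurable (Filter.Eventually.of_forall fun x => ?_)
  rw [Real.norm_eq_abs, Real.norm_eq_abs]
  exact (h x).trans (le_abs_self _)

theorem antithetic_variance_reduction {Ω : Type*} [MeasurableSpace Ω]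
    (P : Measure Ω) [IsProbabilityMeasure P] (Z : Ω → ℝ) (hZm : Measurable Z)
    (hZ : P.map Z = gaussianReal 0 1)
    (g : ℝ → ℝ) (hg : ContDiff ℝ 2 g) (hmono : Monotone g)
    (h0 : PolyGrowth g) (h1 : PolyGrowth (deriv g)) (h2 : PolyGrowth (deriv (deriv g))) :
    variance (fun ω => (g (Z ω) + g (-Z ω)) / 2) P ≤ (1 / 2) * variance (fun ω => g (Z ω)) P := by
  have hc : Continuous g := hg.continuous
  have hL := polyGrowth_memLp hc h0
  have hZn : P.map (fun ω => - Z ω) = gaussianReal 0 1 := by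
    have := gaussianReal_map_neg (μ := 0) (v := 1)
    rw [← hZ, Measure.map_map (by fun_prop) hZm] at this
    simpa [hZ, Function.comp_def] using this
  have hX : MemLp (fun ω => g (Z ω)) 2 P := by
    rw [← hZ] at hL
    exact hL.comp_of_map hZm.aemeasurable
  have hY : MemLp (fun ω => g (- Z ω)) 2 P := by
    rw [← hZn] at hL
    exact hL.comp_of_map hZm.neg.aemeasurable
  have hV : variance (fun ω => g (- Z ω)) P = variance (fun ω => g (Z ω)) P := by
    have a := variance_map (X := g) (μ := P) (Y := Z) hc.aemeasurable hZm.aemeasurable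
    have b := variance_map (X := g) (μ := P) (Y := fun ω => - Z ω) hc.aemeasurable
      hZm.neg.aemeasurable
    rw [hZ] at a
    rw [hZn] at b
    exact b.symm.trans a
  have hXi := hX.integrable (by norm_num)
  have hYi := hY.integrable (by norm_num)
  have hcov : covariance (fun ω => g (Z ω)) (fun ω => g (- Z ω)) P ≤ 0 := by
    obtain ⟨a, ha⟩ := exists_le_integral hXi
    obtain ⟨b, hb⟩ := exists_integral_le hXi
    obtain ⟨z, hz⟩ := mem_range_of_exists_le_of_exists_ge hc ⟨_, ha⟩ ⟨_, hb⟩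
    rw [← covariance_sub_const_right hYi (g (-z)), covariance]
    have hle : ∫ ω, (g (Z ω) - g z) * (g (- Z ω) - g (-z)) ∂P ≤ 0 := by
      refine integral_nonpos fun ω => ?_
      rcases le_total (Z ω) z with h | h
      · exact mul_nonpos_of_nonpos_of_nonneg (sub_nonpos.2 (hmono h))
          (sub_nonneg.2 (hmono (neg_le_neg h)))
      · exact mul_nonpos_of_nonneg_of_nonpos (sub_nonneg.2 (hmono h))
          (sub_nonpos.2 (hmono (neg_le_neg h)))
    have hD : Integrable (fun ω => (g (Z ω) - g z) * (g (- Z ω) - g (-z))) P :=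
      (hX.sub (memLp_const (g z))).integrable_mul (hY.sub (memLp_const (g (-z))))
    have hX0 : ∫ ω, (g (Z ω) - g z) ∂P = 0 := by
      rw [integral_sub hXi (integrable_const _), hz]; simp
    rw [← hz]
    simp_rw [mul_sub (_ - _) (_ - _) (integral _ _)]
    have hE : Integrable (fun ω => (g (Z ω) - g z) * ∫ x, (g (-Z x) - g (-z)) ∂P) P :=
      (hXi.sub (integrable_const _)).mul_const _
    rw [integral_sub hD hE, integral_mul_const, hX0]
    simpa using hle
  have hadd := variance_fun_add hX hY
  simp_rw [div_eq_mul_inv]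
  rw [variance_mul_const, hadd, hV]
  linarith
end
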